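/- (Ljusternik–Schnirelman principle, existence part.) Let X be a reflexive real Banach space and F, G : X → ℝ functionals satisfying: (F1) F and G are even, of class C¹, and F(0) = G(0) = 0; (F2) F′ : X → X* is strongly continuous (it maps weakly convergent sequences to norm-convergent sequences), and if ψ lies in the closed convex hull of S_G := {ψ ∈ X : G(ψ) = 1} and ⟨F′(ψ), ψ⟩ = 0, then F(ψ) = 0; (F3) G′ : X → X* is continuous and bounded (maps bounded sets to bounded sets) and satisfies condition (S₀): if ψ_n ⇀ ψ weakly in X, G′(ψ_n) ⇀ v weakly in X*, and ⟨G′(ψ_n), ψ_n⟩ → ⟨v, ψ⟩, then ψ_n → ψ in norm; (F4) S_G is bounded, for every ψ ≠ 0 one has ⟨G′(ψ), ψ⟩ > 0 and G(tψ) → +∞ as t → +∞, and inf_{ψ ∈ S_G} ⟨G′(ψ), ψ⟩ > 0. For n ≥ 1 let A_n be the class of all compact symmetric subsets K of S_G with F(ψ) > 0 on K and genus γ(K) ≥ n, and set a_n = sup_{K ∈ A_n} inf_{ψ ∈ K} F(ψ) if A_n ≠ ∅ and a_n = 0 otherwise. Then for every n with a_n > 0 there exist ψ_n ∈ S_G and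 a real number μ_n ≠ 0 such that F′(ψ_n) = μ_n G′(ψ_n), F′(−ψ_n) = μ_n G′(−ψ_n), and F(ψ_n) = a_n. -/

import Mathlib

open Filter Topology

/-- The level set `S_G = {ψ : G ψ = 1}`. -/
def levelSG {X : Type*} [NormedAddCommGroup X] [NormedSpace ℝ X] (G : X → ℝ) : Set X :=
  {ψ : X | G ψ = 1}

/-- `GenusGe K n` says that the Krasnoselskii genus of `K` is at least `n`:
for no `k < n` does there exist a continuous odd map `K → ℝ^k ∖ {0}`. -/
def GenusGe {X : Type*} [NormedAddCommGroup X] [NormedSpace ℝ X]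
    (K : Set X) (n : ℕ) : Prop :=
  ∀ k : ℕ, k < n → ¬ ∃ g : X → (Fin k → ℝ),
    ContinuousOn g K ∧ (∀ x ∈ K, g (-x) = -g x) ∧ (∀ x ∈ K, g x ≠ 0)

/-- The class `A_n` of all compact symmetric subsets `K` of `S_G` on which
`F > 0` and with genus `γ(K) ≥ n`. -/
def LSFamily {X : Type*} [NormedAddCommGroup X] [NormedSpace ℝ X]
    (F G : X → ℝ) (n : ℕ) : Set (Set X) :=
  {K : Set X | K ⊆ levelSG G ∧ IsCompact K ∧ K = -K ∧ (∀ ψ ∈ K, 0 < F ψ) ∧ GenusGe K n}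

/-- The Ljusternik–Schnirelman levels `a_n = sup_{K ∈ A_n} inf_{ψ ∈ K} F ψ`
(equal to `0` when `A_n = ∅`, since `sSup ∅ = 0` in `ℝ`). -/
noncomputable def LSLevel {X : Type*} [NormedAddCommGroup X] [NormedSpace ℝ X]
    (F G : X → ℝ) (n : ℕ) : ℝ :=
  sSup ((fun K => sInf (F '' K)) '' LSFamily F G n)

/-!
Fix a compact symmetric `K` on which `F` is almost as large as the level `a_n` allows. Continuous
odd maps from `K` into `S_G` do not lower the genus, so the minimum of `F` along any of them is at
most `a_n`, and Ekeland's principle on the complete metric space of these maps produces one whose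
minimum cannot be improved at a rate better than `ε`. If the derivative of `F` along `S_G` had norm
above `ε` at all the minimum points, an odd field of ascent directions followed by the radial
projection onto `S_G` would yield such an improvement. Hence there are almost critical points of
`F` on `S_G` at levels tending to `a_n`. By reflexivity they converge weakly along a subsequence,
strong continuity of `F'` makes `G'` converge in norm along it, condition (S₀) upgrades the
convergence to norm convergence, and the limit solves `F' ψ = μ • G' ψ`.
-/

section WeakConvergence

variable {ι 𝕜 X : Type*}

/-- Weak convergence of a family `x` in a normed space `X` along a filter `l`, tested against each
continuous linear functional. -/
def WeakTendsto (𝕜 : Type*) [NontriviallyNormedField 𝕜] [SeminormedAddCommGroup X] [NormedSpace 𝕜 X]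
    (x : ι → X) (l : Filter ι) (x₀ : X) : Prop :=
  ∀ f : StrongDual 𝕜 X, Tendsto (fun i => f (x i)) l (𝓝 (f x₀))

theorem WeakTendsto.comp [NontriviallyNormedField 𝕜] [SeminormedAddCommGroup X] [NormedSpace 𝕜 X]
    {κ : Type*} {x : ι → X} {l : Filter ι} {x₀ : X} (hx : WeakTendsto 𝕜 x l x₀)
    {θ : κ → ι} {l' : Filter κ} (hθ : Tendsto θ l' l) : WeakTendsto 𝕜 (x ∘ θ) l' x₀ :=
  fun f => (hx f).comp hθ

theorem WeakTendsto.sub_const [NontriviallyNormedField 𝕜] [SeminormedAddCommGroup X]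
    [NormedSpace 𝕜 X] {x : ι → X} {l : Filter ι} {x₀ : X} (hx : WeakTendsto 𝕜 x l x₀) (y : X) :
    WeakTendsto 𝕜 (fun i => x i - y) l (x₀ - y) := fun f => by
  simpa only [map_sub] using Tendsto.sub_const (hx f) (f y)

theorem WeakTendsto.mem_of_convex [NormedAddCommGroup X] [NormedSpace ℝ X] {x : ι → X}
    {l : Filter ι} [l.NeBot] {x₀ : X} {s : Set X} (hx : WeakTendsto ℝ x l x₀) (hs : Convex ℝ s)
    (hsc : IsClosed s) (hxs : ∀ᶠ i in l, x i ∈ s) : x₀ ∈ s := by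
  by_contra h
  obtain ⟨f, u, hu, hfs⟩ := geometric_hahn_banach_point_closed hs hsc h
  exact (ge_of_tendsto (hx f) (hxs.mono fun i hi => (hfs _ hi).le)).not_gt hu

variable [RCLike 𝕜] [NormedAddCommGroup X] [NormedSpace 𝕜 X]

theorem WeakTendsto.exists_norm_le {x : ℕ → X} {x₀ : X} (hx : WeakTendsto 𝕜 x atTop x₀) :
    ∃ R, ∀ n, ‖x n‖ ≤ R := by
  obtain ⟨R, hR⟩ := banach_steinhaus (g := fun n => NormedSpace.inclusionInDoubleDual 𝕜 X (x n))
    fun f => (hx f).norm.bddAbove_range.imp fun _ hC n => hC ⟨n, rfl⟩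
  exact ⟨R, fun n => (NormedSpace.inclusionInDoubleDualLi 𝕜).norm_map (x n) ▸ hR n⟩

theorem WeakTendsto.clm_apply {f : ℕ → StrongDual 𝕜 X} {f₀ : StrongDual 𝕜 X} {x : ℕ → X} {x₀ : X}
    (hx : WeakTendsto 𝕜 x atTop x₀) (hf : Tendsto f atTop (𝓝 f₀)) :
    Tendsto (fun n => f n (x n)) atTop (𝓝 (f₀ x₀)) := by
  obtain ⟨R, hR⟩ := hx.exists_norm_le
  have hdiff : Tendsto (fun n => (f n - f₀) (x n)) atTop (𝓝 0) := by
    have hbound : Tendsto (fun n => ‖f n - f₀‖ * R) atTop (𝓝 0) := by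
      simpa using (tendsto_iff_norm_sub_tendsto_zero.1 hf).mul_const R
    exact squeeze_zero_norm (fun n => (f n - f₀).le_opNorm_of_le (hR n)) hbound
  simpa using hdiff.add (hx f₀)

theorem exists_seq_strongDual_separating {s : Set X} (hs : TopologicalSpace.IsSeparable s) :
    ∃ f : ℕ → StrongDual 𝕜 X, ∀ x ∈ s, (∀ n, f n x = 0) → x = 0 := by
  obtain ⟨d, hd, hds⟩ := hs
  rcases d.eq_empty_or_nonempty with rfl | hdne
  · exact ⟨0, fun x hx => by simpa using hds hx⟩
  obtain ⟨y, rfl⟩ := hd.exists_eq_range hdne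
  choose f hf_norm hf_apply using fun n => exists_dual_vector'' 𝕜 (y n)
  refine ⟨f, fun x hx hfx => norm_le_zero_iff.1 (le_of_forall_pos_le_add fun ε hε => ?_)⟩
  obtain ⟨_, ⟨n, rfl⟩, hn⟩ := Metric.mem_closure_iff.1 (hds hx) (ε / 2) (half_pos hε)
  have hyn : ‖y n‖ ≤ ‖x - y n‖ :=
    calc ‖y n‖ = ‖f n (x - y n)‖ := by simp [hfx, hf_apply]
      _ ≤ 1 * ‖x - y n‖ := (f n).le_of_opNorm_le (hf_norm n) _
      _ = ‖x - y n‖ := one_mul _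
  have htri : ‖x‖ ≤ ‖x - y n‖ + ‖y n‖ := norm_le_norm_sub_add x (y n)
  rw [dist_eq_norm] at hn
  linarith

theorem continuous_apply_toWeakSpace_symm (f : StrongDual 𝕜 X) :
    Continuous fun w : WeakSpace 𝕜 X => f ((toWeakSpace 𝕜 X).symm w) :=
  WeakBilin.eval_continuous (topDualPairing 𝕜 X).flip f

theorem metrizableSpace_of_isCompact_weakSpace {K : Set (WeakSpace 𝕜 X)} (hK : IsCompact K)
    (hsep : TopologicalSpace.IsSeparable (toWeakSpace 𝕜 X ⁻¹' K)) :
    TopologicalSpace.MetrizableSpace K := by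
  obtain ⟨f, hf⟩ := exists_seq_strongDual_separating (𝕜 := 𝕜)
    ((hsep.prod hsep).image continuous_sub)
  have : CompactSpace K := isCompact_iff_compactSpace.1 hK
  refine Metric.PiNatEmbed.TopologicalSpace.MetrizableSpace.of_countable_separating
    (fun n (w : K) => f n ((toWeakSpace 𝕜 X).symm w))
    (fun n => (continuous_apply_toWeakSpace_symm (f n)).comp continuous_subtype_val) ?_
  intro u w huw
  contrapose! huw
  have hmem (z : K) : (toWeakSpace 𝕜 X).symm z ∈ toWeakSpace 𝕜 X ⁻¹' K := by simp
  have hsub : (toWeakSpace 𝕜 X).symm u - (toWeakSpace 𝕜 X).symm w = 0 :=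
    hf _ ⟨(_, _), ⟨hmem u, hmem w⟩, rfl⟩ fun n => by rw [map_sub, huw n, sub_self]
  exact Subtype.ext ((toWeakSpace 𝕜 X).symm.injective (sub_eq_zero.1 hsub))

theorem isSeparable_preimage_closure_image_toWeakSpace {s : Set X}
    (hs : TopologicalSpace.IsSeparable s) :
    TopologicalSpace.IsSeparable (toWeakSpace 𝕜 X ⁻¹' closure (toWeakSpace 𝕜 X '' s)) := by
  let : NormedSpace ℝ X := NormedSpace.restrictScalars ℝ 𝕜 X
  have hmazur := ((Submodule.span 𝕜 s).restrictScalars ℝ).convex.toWeakSpace_closure 𝕜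
  refine (hs.span (R := 𝕜)).closure.mono fun x hx => ?_
  have hx' : toWeakSpace 𝕜 X x ∈ closure (toWeakSpace 𝕜 X '' (Submodule.span 𝕜 s : Set X)) :=
    closure_mono (Set.image_mono Submodule.subset_span) hx
  rw [← Submodule.coe_restrictScalars ℝ, ← hmazur] at hx'
  exact (toWeakSpace 𝕜 X).injective.mem_set_image.1 hx'

theorem isCompact_closure_toWeakSpace_of_reflexive
    (hrefl : Function.Surjective (NormedSpace.inclusionInDoubleDual 𝕜 X)) {s : Set X}
    (hs : Bornology.IsBounded s) : IsCompact (closure (toWeakSpace 𝕜 X '' s)) := by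
  refine NormedSpace.isCompact_closure_of_isBounded 𝕜 X _ ?_ fun f _ => ?_
  · rwa [Set.preimage_image_eq _ (toWeakSpace 𝕜 X).injective]
  · obtain ⟨y, hy⟩ := hrefl (WeakDual.toStrongDual f)
    exact ⟨toWeakSpace 𝕜 X y, DFunLike.ext _ _ fun g => DFunLike.congr_fun hy g⟩

-- The weak topology is metrizable on the weak closure of the (countable) range of the sequence.
theorem exists_subseq_weakTendsto
    (hrefl : Function.Surjective (NormedSpace.inclusionInDoubleDual 𝕜 X)) {x : ℕ → X}
    (hx : Bornology.IsBounded (Set.range x)) :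
    ∃ (x₀ : X) (θ : ℕ → ℕ), StrictMono θ ∧ WeakTendsto 𝕜 (x ∘ θ) atTop x₀ := by
  set K : Set (WeakSpace 𝕜 X) := closure (toWeakSpace 𝕜 X '' Set.range x)
  have hK : IsCompact K := isCompact_closure_toWeakSpace_of_reflexive hrefl hx
  have : CompactSpace K := isCompact_iff_compactSpace.1 hK
  have : TopologicalSpace.MetrizableSpace K := metrizableSpace_of_isCompact_weakSpace hK
    (isSeparable_preimage_closure_image_toWeakSpace (Set.countable_range x).isSeparable)
  obtain ⟨w, θ, hθ, hlim⟩ := SeqCompactSpace.tendsto_subseq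
    fun n => (⟨toWeakSpace 𝕜 X (x n), subset_closure ⟨_, ⟨n, rfl⟩, rfl⟩⟩ : K)
  exact ⟨(toWeakSpace 𝕜 X).symm w, θ, hθ, fun f =>
    (((continuous_apply_toWeakSpace_symm f).comp continuous_subtype_val).tendsto w).comp hlim⟩

end WeakConvergence

section StrongContinuity

variable {X : Type*} [NormedAddCommGroup X] [NormedSpace ℝ X]

/-- A map is strongly continuous if it maps weakly convergent sequences to norm convergent ones. -/
def StronglyContinuous {Y : Type*} [TopologicalSpace Y] (T : X → Y) : Prop :=
  ∀ (x : ℕ → X) (x₀ : X), WeakTendsto ℝ x atTop x₀ → Tendsto (fun n => T (x n)) atTop (𝓝 (T x₀))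

theorem exists_mem_Ioo_apply_sub_eq_sub {F : X → ℝ} {F' : X → StrongDual ℝ X}
    (hF : ∀ x, HasFDerivAt F (F' x) x) (x y : X) :
    ∃ c ∈ Set.Ioo (0 : ℝ) 1, F' (x + c • (y - x)) (y - x) = F y - F x := by
  have hderiv (c : ℝ) : HasDerivAt (fun c : ℝ => F (x + c • (y - x)))
      (F' (x + c • (y - x)) ((1 : ℝ) • (y - x))) c :=
    (hF _).comp_hasDerivAt c (((hasDerivAt_id c).smul_const _).const_add _)
  obtain ⟨c, hc, hslope⟩ := exists_hasDerivAt_eq_slope _ _ (zero_lt_one' ℝ)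
    (fun c _ => (hderiv c).continuousAt.continuousWithinAt) fun c _ => hderiv c
  exact ⟨c, hc, by simpa using hslope⟩

theorem StronglyContinuous.of_hasFDerivAt {F : X → ℝ} {F' : X → StrongDual ℝ X}
    (hF' : StronglyContinuous F') (hF : ∀ x, HasFDerivAt F (F' x) x) : StronglyContinuous F := by
  intro x x₀ hx
  choose c hc hmean using fun n => exists_mem_Ioo_apply_sub_eq_sub hF x₀ (x n)
  have hweak : WeakTendsto ℝ (fun n => x n - x₀) atTop 0 := by simpa using hx.sub_const x₀
  have hsegment : WeakTendsto ℝ (fun n => x₀ + c n • (x n - x₀)) atTop x₀ := fun f => by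
    have hzero : Tendsto (fun n => c n * f (x n - x₀)) atTop (𝓝 0) :=
      isBoundedUnder_le_mul_tendsto_zero
        (isBoundedUnder_of ⟨1, fun n => by simpa [abs_of_pos (hc n).1] using (hc n).2.le⟩)
        (by simpa using hweak f)
    simpa using hzero.const_add (f x₀)
  have hincrement := hweak.clm_apply (hF' _ _ hsegment)
  simp only [hmean, map_zero] at hincrement
  simpa using hincrement.add_const (F x₀)

end StrongContinuity

section Ekeland

variable {α : Type*} [MetricSpace α] {Φ : α → ℝ} {ε : ℝ} {x y z : α}

/-- The points above `x` in the order underlying Ekeland's variational principle for maximizing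
`Φ`: those at which the gain in `Φ` is at least `ε` times the distance travelled. -/
def ekelandSet (Φ : α → ℝ) (ε : ℝ) (x : α) : Set α :=
  {y | Φ x + ε * dist x y ≤ Φ y}

theorem self_mem_ekelandSet (Φ : α → ℝ) (ε : ℝ) (x : α) : x ∈ ekelandSet Φ ε x := by
  simp [ekelandSet]

theorem mem_ekelandSet_trans (hε : 0 ≤ ε) (hxy : y ∈ ekelandSet Φ ε x)
    (hyz : z ∈ ekelandSet Φ ε y) : z ∈ ekelandSet Φ ε x := by
  have htri := mul_le_mul_of_nonneg_left (dist_triangle x y z) hε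
  simp only [ekelandSet, Set.mem_ofPred_eq] at hxy hyz ⊢
  linarith

theorem le_of_mem_ekelandSet (hε : 0 ≤ ε) (hxy : y ∈ ekelandSet Φ ε x) : Φ x ≤ Φ y :=
  (le_add_of_nonneg_right (mul_nonneg hε dist_nonneg)).trans hxy

theorem isClosed_ekelandSet (hΦ : UpperSemicontinuous Φ) (ε : ℝ) (x : α) :
    IsClosed (ekelandSet Φ ε x) := by
  have husc : UpperSemicontinuous fun y => Φ y + -(ε * dist x y) :=
    hΦ.add (Continuous.upperSemicontinuous (by fun_prop))
  convert husc.isClosed_preimage (Φ x) using 1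
  ext y
  simp only [ekelandSet, Set.mem_ofPred_eq, Set.mem_preimage, Set.mem_Ici, ← sub_eq_add_neg,
    le_sub_iff_add_le]

theorem exists_mem_ekelandSet_forall_dist_le (hbdd : BddAbove (Set.range Φ)) (hε : 0 < ε) (x : α)
    {δ : ℝ} (hδ : 0 < δ) :
    ∃ y ∈ ekelandSet Φ ε x, ∀ z ∈ ekelandSet Φ ε y, dist y z ≤ δ := by
  obtain ⟨_, ⟨y, hy, rfl⟩, hlt⟩ := exists_lt_of_lt_csSup
    (Set.Nonempty.image Φ ⟨x, self_mem_ekelandSet Φ ε x⟩) (sub_lt_self _ (mul_pos hε hδ))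
  refine ⟨y, hy, fun z hz => le_of_mul_le_mul_left ?_ hε⟩
  have hsup : Φ z ≤ sSup (Φ '' ekelandSet Φ ε x) :=
    le_csSup (hbdd.mono (Set.image_subset_range _ _)) ⟨z, mem_ekelandSet_trans hε.le hy hz, rfl⟩
  have hgain : Φ y + ε * dist y z ≤ Φ z := hz
  linarith

theorem exists_seq_ekelandSet (hbdd : BddAbove (Set.range Φ)) (hε : 0 < ε) (x₀ : α) :
    ∃ u : ℕ → α, (∀ n, u n ∈ ekelandSet Φ ε x₀) ∧ (∀ m n, m ≤ n → u n ∈ ekelandSet Φ ε (u m)) ∧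
      ∀ n, ∀ z ∈ ekelandSet Φ ε (u n), dist (u n) z ≤ (1 / 2 : ℝ) ^ n := by
  choose next hnext hdist using fun (n : ℕ) (x : α) =>
    exists_mem_ekelandSet_forall_dist_le hbdd hε x (by positivity : (0 : ℝ) < (1 / 2) ^ n)
  let u : ℕ → α := fun n => Nat.rec (next 0 x₀) (fun n x => next (n + 1) x) n
  have hmono (m n : ℕ) (hmn : m ≤ n) : u n ∈ ekelandSet Φ ε (u m) := by
    induction n, hmn using Nat.le_induction with
    | base => exact self_mem_ekelandSet Φ ε _
    | succ n _ ih => exact mem_ekelandSet_trans hε.le ih (hnext (n + 1) (u n))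
  refine ⟨u, fun n => mem_ekelandSet_trans hε.le (hnext 0 x₀) (hmono 0 n n.zero_le), hmono, ?_⟩
  rintro (_ | n)
  exacts [hdist 0 x₀, hdist (n + 1) (u n)]

theorem exists_le_forall_ne_lt_add_mul_dist [CompleteSpace α] (hΦ : UpperSemicontinuous Φ)
    (hbdd : BddAbove (Set.range Φ)) (hε : 0 < ε) (x₀ : α) :
    ∃ x, Φ x₀ ≤ Φ x ∧ ∀ y, y ≠ x → Φ y < Φ x + ε * dist x y := by
  obtain ⟨u, hu₀, hmono, hdist⟩ := exists_seq_ekelandSet hbdd hε x₀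
  have hpow : Tendsto (fun n : ℕ => (1 / 2 : ℝ) ^ n) atTop (𝓝 0) :=
    tendsto_pow_atTop_nhds_zero_of_lt_one (by norm_num) (by norm_num)
  obtain ⟨x, hx⟩ := cauchySeq_tendsto_of_complete <|
    cauchySeq_of_le_tendsto_0' _ (fun m n hmn => hdist m _ (hmono m n hmn)) hpow
  have hxu (n : ℕ) : x ∈ ekelandSet Φ ε (u n) :=
    (isClosed_ekelandSet hΦ ε _).mem_of_tendsto hx (eventually_atTop.2 ⟨n, hmono n⟩)
  refine ⟨x, le_of_mem_ekelandSet hε.le (mem_ekelandSet_trans hε.le (hu₀ 0) (hxu 0)),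
    fun y hyx => ?_⟩
  by_contra! hy
  refine hyx (tendsto_nhds_unique ?_ hx)
  exact tendsto_iff_dist_tendsto_zero.2 <| squeeze_zero (fun _ => dist_nonneg)
    (fun n => hdist n y (mem_ekelandSet_trans hε.le (hxu n) hy)) hpow

end Ekeland

section AscentField

variable {X : Type*} [NormedAddCommGroup X] [NormedSpace ℝ X]

theorem exists_norm_le_one_lt_apply {f : StrongDual ℝ X} {η : ℝ} (hη : η < ‖f‖) :
    ∃ w, ‖w‖ ≤ 1 ∧ η < f w := by
  obtain ⟨w, hw, hηw⟩ := f.exists_lt_apply_of_lt_opNorm hη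
  rcases le_total 0 (f w) with h | h
  · exact ⟨w, hw.le, by rwa [Real.norm_of_nonneg h] at hηw⟩
  · exact ⟨-w, by simpa using hw.le, by rwa [Real.norm_of_nonpos h, ← map_neg] at hηw⟩

theorem exists_continuousMap_lt_apply {Z : Type*} [TopologicalSpace Z] [NormalSpace Z]
    [ParacompactSpace Z] {T : Z → StrongDual ℝ X} {C : Set Z} (hC : IsClosed C)
    (hT : ContinuousOn T C) {η : ℝ} (hη : ∀ z ∈ C, η < ‖T z‖) :
    ∃ v : C(Z, X), (∀ z, ‖v z‖ ≤ 1) ∧ ∀ z ∈ C, η < T z (v z) := by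
  let t : Z → Set X := fun z => Metric.closedBall 0 1 ∩ {w | z ∈ C → η < T z w}
  have hconvex (z : Z) : Convex ℝ (t z) := by
    refine (convex_closedBall _ _).inter ?_
    by_cases hz : z ∈ C
    · simpa [hz] using convex_halfSpace_gt (T z).toLinearMap.isLinear η
    · simp [hz, convex_univ]
  have hlocal (z : Z) : ∃ w, ∀ᶠ y in 𝓝 z, w ∈ t y := by
    by_cases hz : z ∈ C
    · obtain ⟨w, hw, hηw⟩ := exists_norm_le_one_lt_apply (hη z hz)
      have hnear : ∀ᶠ y in 𝓝[C] z, η < T y w :=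
        ((hT z hz).clm_apply continuousWithinAt_const).eventually (lt_mem_nhds hηw)
      exact ⟨w, (eventually_nhdsWithin_iff.1 hnear).mono fun y hy => ⟨by simpa using hw, hy⟩⟩
    · refine ⟨0, ?_⟩
      filter_upwards [hC.isOpen_compl.mem_nhds hz] with y hy
      exact ⟨by simp, fun h => absurd h hy⟩
  obtain ⟨v, hv⟩ := exists_continuous_forall_mem_convex_of_local_const hconvex hlocal
  exact ⟨v, fun z => by simpa using (hv z).1, fun z => (hv z).2⟩

theorem exists_odd_continuousMap_lt_apply {Z : Type*} [TopologicalSpace Z] [NormalSpace Z]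
    [ParacompactSpace Z] [InvolutiveNeg Z] [ContinuousNeg Z] {T : Z → StrongDual ℝ X} {C : Set Z}
    (hC : IsClosed C) (hCneg : ∀ z ∈ C, -z ∈ C) (hT : ContinuousOn T C)
    (hTneg : ∀ z ∈ C, T (-z) = -T z) {η : ℝ} (hη : ∀ z ∈ C, η < ‖T z‖) :
    ∃ v : C(Z, X), Function.Odd v ∧ (∀ z, ‖v z‖ ≤ 1) ∧ ∀ z ∈ C, η < T z (v z) := by
  obtain ⟨g, hg_norm, hg⟩ := exists_continuousMap_lt_apply hC hT hη
  refine ⟨⟨fun z => (1 / 2 : ℝ) • (g z - g (-z)), by fun_prop⟩, fun z => ?_, fun z => ?_,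
    fun z hz => ?_⟩
  · simp [← smul_neg]
  · calc ‖(1 / 2 : ℝ) • (g z - g (-z))‖ = 1 / 2 * ‖g z - g (-z)‖ := by simp [norm_smul]
      _ ≤ 1 / 2 * (1 + 1) := by
        gcongr
        exact norm_sub_le_of_le (hg_norm z) (hg_norm (-z))
      _ = 1 := by norm_num
  · have hneg : η < -T z (g (-z)) := by
      simpa only [hTneg z hz, neg_apply] using hg (-z) (hCneg z hz)
    have hpos := hg z hz
    simp only [ContinuousMap.coe_mk, map_smul, map_sub, smul_eq_mul]
    linarith

end AscentField

section UniformAscent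

variable {X Y : Type*} [NormedAddCommGroup X] [NormedSpace ℝ X] [NormedAddCommGroup Y]
  [NormedSpace ℝ Y]

theorem tendsto_add_smul_nhds_zero {v : X → X} {x : X} (hv : ContinuousAt v x) :
    Tendsto (fun p : ℝ × X => p.2 + p.1 • v p.2) (𝓝 (0, x)) (𝓝 x) := by
  have hcont : ContinuousAt (fun p : ℝ × X => p.2 + p.1 • v p.2) (0, x) :=
    continuousAt_snd.add (continuousAt_fst.smul (hv.comp (x := (0, x)) continuousAt_snd))
  simpa [ContinuousAt] using hcont

theorem isLittleO_sub_sub_smul_of_hasStrictFDerivAt {f : X → Y} {A : X →L[ℝ] Y} {v : X → X} {x : X}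
    (hf : HasStrictFDerivAt f A x) (hv : ContinuousAt v x) :
    (fun p : ℝ × X => f (p.2 + p.1 • v p.2) - f p.2 - p.1 • A (v x)) =o[𝓝 (0, x)] Prod.fst := by
  have hvx : Tendsto (fun p : ℝ × X => v p.2) (𝓝 (0, x)) (𝓝 (v x)) :=
    hv.tendsto.comp continuousAt_snd
  have hstep : (fun p : ℝ × X => p.2 + p.1 • v p.2 - p.2) =O[𝓝 (0, x)] Prod.fst := by
    simpa [Function.comp_def] using
      (Asymptotics.isBigO_refl Prod.fst (𝓝 ((0 : ℝ), x))).smul (hvx.isBigO_one ℝ)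
  have hexpand := (hf.isLittleO.comp_tendsto
    ((tendsto_add_smul_nhds_zero hv).prodMk_nhds continuousAt_snd)).trans_isBigO hstep
  have hdir : (fun p : ℝ × X => p.1 • (A (v p.2) - A (v x))) =o[𝓝 (0, x)] Prod.fst := by
    have hzero : Tendsto (fun p : ℝ × X => A (v p.2) - A (v x)) (𝓝 (0, x)) (𝓝 0) := by
      simpa using ((A.continuous.tendsto _).comp hvx).sub_const (A (v x))
    simpa using (Asymptotics.isBigO_refl Prod.fst (𝓝 ((0 : ℝ), x))).smul_isLittleO
      ((Asymptotics.isLittleO_one_iff ℝ).2 hzero)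
  refine (hexpand.add hdir).congr_left fun p => ?_
  simp [smul_sub]

theorem eventually_nhdsGT_forall_mem_of_isCompact {Z : Type*} [TopologicalSpace Z] {K : Set Z}
    (hK : IsCompact K) {P : ℝ → Z → Prop}
    (hP : ∀ x ∈ K, ∀ᶠ p : ℝ × Z in 𝓝 (0, x), p.2 ∈ K → 0 < p.1 → P p.1 p.2) :
    ∀ᶠ s in 𝓝[>] (0 : ℝ), ∀ x ∈ K, P s x := by
  have hnear := hK.eventually_forall_of_forall_eventually
    (P := fun s x => x ∈ K → 0 < s → P s x) hP
  filter_upwards [nhdsWithin_le_nhds hnear, self_mem_nhdsWithin] with s hs hs0 x hx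
  exact hs x hx hx hs0

variable {K : Set X} {v : X → X}

theorem eventually_forall_add_smul_mem (hK : IsCompact K) (hv : ∀ x ∈ K, ContinuousAt v x)
    {U : Set X} (hU : IsOpen U) (hKU : K ⊆ U) :
    ∀ᶠ s in 𝓝[>] (0 : ℝ), ∀ x ∈ K, x + s • v x ∈ U :=
  eventually_nhdsGT_forall_mem_of_isCompact hK fun x hx =>
    ((tendsto_add_smul_nhds_zero (hv x hx)).eventually (hU.mem_nhds (hKU hx))).mono
      fun _ hp _ _ => hp

theorem eventually_forall_norm_add_smul_sub_le (hK : IsCompact K)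
    (hv : ∀ x ∈ K, ContinuousAt v x) {f : X → Y} {A : X → X →L[ℝ] Y}
    (hf : ∀ x ∈ K, HasStrictFDerivAt f (A x) x) {L : ℝ} (hL : ∀ x ∈ K, ‖A x (v x)‖ < L) :
    ∀ᶠ s in 𝓝[>] (0 : ℝ), ∀ x ∈ K, ‖f (x + s • v x) - f x‖ ≤ L * s := by
  refine eventually_nhdsGT_forall_mem_of_isCompact hK fun x hx => ?_
  filter_upwards [(isLittleO_sub_sub_smul_of_hasStrictFDerivAt (hf x hx) (hv x hx)).bound
    (sub_pos.2 (hL x hx))] with p hp _ hs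
  rw [Real.norm_of_nonneg hs.le] at hp
  calc ‖f (p.2 + p.1 • v p.2) - f p.2‖
      ≤ ‖f (p.2 + p.1 • v p.2) - f p.2 - p.1 • A x (v x)‖ + ‖p.1 • A x (v x)‖ :=
        norm_le_norm_sub_add _ _
    _ ≤ (L - ‖A x (v x)‖) * p.1 + p.1 * ‖A x (v x)‖ := by
        rw [norm_smul, Real.norm_of_nonneg hs.le]
        gcongr
    _ = L * p.1 := by ring

theorem eventually_forall_add_mul_le_apply_add_smul (hK : IsCompact K)
    (hv : ∀ x ∈ K, ContinuousAt v x) {f : X → ℝ} {T : X → StrongDual ℝ X}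
    (hf : ∀ x ∈ K, HasStrictFDerivAt f (T x) x) {m η : ℝ} (hm : ∀ x ∈ K, m ≤ f x)
    (hη : ∀ x ∈ K, f x = m → η < T x (v x)) :
    ∀ᶠ s in 𝓝[>] (0 : ℝ), ∀ x ∈ K, m + s * η ≤ f (x + s • v x) := by
  refine eventually_nhdsGT_forall_mem_of_isCompact hK fun x hx => ?_
  rcases (hm x hx).eq_or_lt' with heq | hlt
  · filter_upwards [(isLittleO_sub_sub_smul_of_hasStrictFDerivAt (hf x hx) (hv x hx)).bound
      (sub_pos.2 (hη x hx heq))] with p hp hpK hs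
    rw [Real.norm_of_nonneg hs.le, Real.norm_eq_abs, smul_eq_mul] at hp
    have hlower := (abs_le.1 hp).1
    have hbase := hm _ hpK
    linarith
  · have hlim : Tendsto (fun p : ℝ × X => f (p.2 + p.1 • v p.2) - p.1 * η) (𝓝 (0, x))
        (𝓝 (f x - 0 * η)) :=
      ((hf x hx).continuousAt.tendsto.comp (tendsto_add_smul_nhds_zero (hv x hx))).sub
        ((continuous_fst.tendsto (0, x)).mul_const η)
    rw [zero_mul, sub_zero] at hlim
    filter_upwards [hlim.eventually (lt_mem_nhds hlt)] with p hp _ _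
    linarith

end UniformAscent

section TangentialDerivative

theorem fderiv_neg_of_even {𝕜 X Y : Type*} [NontriviallyNormedField 𝕜] [NormedAddCommGroup X]
    [NormedSpace 𝕜 X] [NormedAddCommGroup Y] [NormedSpace 𝕜 Y] {f : X → Y} {f' : X → X →L[𝕜] Y}
    (hf : Function.Even f) (hf' : ∀ x, HasFDerivAt f (f' x) x) (x : X) : f' (-x) = -f' x := by
  have hcomp := (hf' (-x)).comp x (hasFDerivAt_id x).neg
  rw [show f ∘ Neg.neg = f from funext hf] at hcomp
  rw [← hcomp.unique (hf' x)]
  ext w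
  simp

variable {X : Type*} [NormedAddCommGroup X] [NormedSpace ℝ X]

/-- The projection onto the kernel of `g` along `x`. When `g x = 0` there is no such projection
and, since `0⁻¹ = 0`, this is the identity. -/
noncomputable def tangentProj (g : StrongDual ℝ X) (x : X) : X →L[ℝ] X :=
  ContinuousLinearMap.id ℝ X - g.smulRight ((g x)⁻¹ • x)

theorem norm_tangentProj_le {g : StrongDual ℝ X} {x : X} {B R δ : ℝ} (hg : ‖g‖ ≤ B) (hx : ‖x‖ ≤ R)
    (hδ : 0 < δ) (hgx : δ ≤ g x) : ‖tangentProj g x‖ ≤ 1 + B * (δ⁻¹ * R) := by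
  have hB : 0 ≤ B := (norm_nonneg _).trans hg
  have hgx_nonneg : 0 ≤ g x := hδ.le.trans hgx
  refine norm_sub_le_of_le ContinuousLinearMap.norm_id_le ?_
  rw [ContinuousLinearMap.norm_smulRight_apply, norm_smul, norm_inv,
    Real.norm_of_nonneg hgx_nonneg]
  gcongr

variable {F' G' : X → StrongDual ℝ X} {x : X}

/-- The derivative at `x` of a functional with derivative `F'`, along the level set through `x` of
a functional with derivative `G'`, extended to all of `X` by zero in the direction of `x`. It
vanishes exactly when `F' x` is the Lagrange multiple `(F' x x / G' x x) • G' x`. -/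
noncomputable def tangentialDeriv (F' G' : X → StrongDual ℝ X) (x : X) : StrongDual ℝ X :=
  F' x ∘L tangentProj (G' x) x

theorem tangentialDeriv_eq_sub (F' G' : X → StrongDual ℝ X) (x : X) :
    tangentialDeriv F' G' x = F' x - (F' x x / G' x x) • G' x := by
  ext w
  simp only [tangentialDeriv, tangentProj, ContinuousLinearMap.comp_sub,
    ContinuousLinearMap.comp_id, sub_apply, ContinuousLinearMap.comp_apply,
    ContinuousLinearMap.smulRight_apply, map_smul, smul_eq_mul, smul_apply, sub_right_inj]
  ring

theorem tangentialDeriv_neg (hF : F' (-x) = -F' x) (hG : G' (-x) = -G' x) :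
    tangentialDeriv F' G' (-x) = -tangentialDeriv F' G' x := by
  simp [tangentialDeriv_eq_sub, hF, hG, neg_add_eq_sub]

theorem continuousAt_tangentialDeriv (hF : ContinuousAt F' x) (hG : ContinuousAt G' x)
    (hx : G' x x ≠ 0) : ContinuousAt (tangentialDeriv F' G') x := by
  rw [funext (tangentialDeriv_eq_sub F' G')]
  fun_prop (disch := exact hx)

end TangentialDerivative

section RadialProjection

variable {X : Type*} [NormedAddCommGroup X] [NormedSpace ℝ X]

/-- A `C¹` functional `G` with derivative `G'` which increases from a value below `1` to infinity
along every ray from the origin, so that each ray crosses the level set `S_G` exactly once. -/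
structure IsRadialConstraint (G : X → ℝ) (G' : X → StrongDual ℝ X) : Prop where
  hasFDerivAt : ∀ x, HasFDerivAt G (G' x) x
  continuous_deriv : Continuous G'
  map_zero_lt_one : G 0 < 1
  deriv_pos : ∀ x, x ≠ 0 → 0 < G' x x
  tendsto_atTop : ∀ x, x ≠ 0 → Tendsto (fun t : ℝ => G (t • x)) atTop atTop

/-- The factor by which `x ≠ 0` has to be scaled to reach the level set `S_G`. It is characterized
by `IsRadialConstraint.radialScale_eq`; at `x = 0` it has the junk value `0`. -/
noncomputable def radialScale (G : X → ℝ) (x : X) : ℝ :=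
  sInf {t | 0 < t ∧ G (t • x) = 1}

/-- The projection of `X ∖ {0}` onto the level set `S_G` along rays from the origin. -/
noncomputable def radialProj (G : X → ℝ) (x : X) : X :=
  radialScale G x • x

theorem radialProj_neg {G : X → ℝ} (hG : Function.Even G) (x : X) :
    radialProj G (-x) = -radialProj G x := by
  simp only [radialProj, radialScale, smul_neg, hG _]

namespace IsRadialConstraint

variable {G : X → ℝ} {G' : X → StrongDual ℝ X} {x : X}

theorem continuous (hG : IsRadialConstraint G G') : Continuous G :=
  continuous_iff_continuousAt.2 fun x => (hG.hasFDerivAt x).continuousAt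

theorem isClosed_levelSG (hG : IsRadialConstraint G G') : IsClosed (levelSG G) :=
  isClosed_eq hG.continuous continuous_const

theorem ne_zero_of_mem_levelSG (hG : IsRadialConstraint G G') (hx : x ∈ levelSG G) : x ≠ 0 := by
  rintro rfl
  exact hG.map_zero_lt_one.ne hx

theorem deriv_smul_pos (hG : IsRadialConstraint G G') (hx : x ≠ 0) {t : ℝ} (ht : 0 < t) :
    0 < G' (t • x) x := by
  have hpos := hG.deriv_pos (t • x) (smul_ne_zero ht.ne' hx)
  rw [map_smul, smul_eq_mul] at hpos
  exact pos_of_mul_pos_right hpos ht.le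

theorem strictMonoOn_smul (hG : IsRadialConstraint G G') (hx : x ≠ 0) :
    StrictMonoOn (fun t : ℝ => G (t • x)) (Set.Ici 0) := by
  have hcont := hG.continuous
  refine strictMonoOn_of_hasDerivWithinAt_pos (f' := fun t => G' (t • x) ((1 : ℝ) • x))
    (convex_Ici 0) (by fun_prop) (fun t _ => ?_) fun t ht => ?_
  · exact ((hG.hasFDerivAt (t • x)).comp_hasDerivAt t
      ((hasDerivAt_id t).smul_const x)).hasDerivWithinAt
  · rw [interior_Ici] at ht
    simpa using hG.deriv_smul_pos hx ht

theorem exists_pos_smul_mem_levelSG (hG : IsRadialConstraint G G') (hx : x ≠ 0) :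
    ∃ t : ℝ, 0 < t ∧ t • x ∈ levelSG G := by
  have hcont := hG.continuous
  obtain ⟨b, hb, hb0⟩ := (((hG.tendsto_atTop x hx).eventually_ge_atTop 1).and
    (eventually_ge_atTop (0 : ℝ))).exists
  obtain ⟨t, ht, hGt⟩ := intermediate_value_Ioc hb0 (f := fun t : ℝ => G (t • x)) (by fun_prop)
    (show (1 : ℝ) ∈ _ by simpa [hG.map_zero_lt_one] using hb)
  exact ⟨t, ht.1, hGt⟩

theorem radialScale_eq (hG : IsRadialConstraint G G') (hx : x ≠ 0) {t : ℝ} (ht : 0 < t)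
    (htx : t • x ∈ levelSG G) : radialScale G x = t := by
  have hset : {s | 0 < s ∧ G (s • x) = 1} = {t} := by
    ext s
    refine ⟨fun hs => ?_, fun hs => hs ▸ ⟨ht, htx⟩⟩
    exact (hG.strictMonoOn_smul hx).injOn hs.1.le ht.le (hs.2.trans htx.symm)
  rw [radialScale, hset, csInf_singleton]

theorem radialScale_pos (hG : IsRadialConstraint G G') (hx : x ≠ 0) : 0 < radialScale G x := by
  obtain ⟨t, ht, htx⟩ := hG.exists_pos_smul_mem_levelSG hx
  rwa [hG.radialScale_eq hx ht htx]

theorem radialProj_mem_levelSG (hG : IsRadialConstraint G G') (hx : x ≠ 0) :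
    radialProj G x ∈ levelSG G := by
  obtain ⟨t, ht, htx⟩ := hG.exists_pos_smul_mem_levelSG hx
  rwa [radialProj, hG.radialScale_eq hx ht htx]

theorem radialScale_of_mem_levelSG (hG : IsRadialConstraint G G') (hx : x ∈ levelSG G) :
    radialScale G x = 1 :=
  hG.radialScale_eq (hG.ne_zero_of_mem_levelSG hx) one_pos (by rwa [one_smul])

theorem radialProj_of_mem_levelSG (hG : IsRadialConstraint G G') (hx : x ∈ levelSG G) :
    radialProj G x = x := by
  rw [radialProj, hG.radialScale_of_mem_levelSG hx, one_smul]

theorem hasStrictFDerivAt (hG : IsRadialConstraint G G') (x : X) : HasStrictFDerivAt G (G' x) x :=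
  hasStrictFDerivAt_of_hasFDerivAt_of_continuousAt (Eventually.of_forall hG.hasFDerivAt)
    hG.continuous_deriv.continuousAt

theorem hasStrictFDerivAt_radialScale [CompleteSpace X] (hG : IsRadialConstraint G G')
    (hx : x ≠ 0) :
    HasStrictFDerivAt (radialScale G)
      (-(radialScale G x / G' (radialProj G x) x) • G' (radialProj G x)) x := by
  set t := radialScale G x
  have ht : 0 < t := hG.radialScale_pos hx
  have hpos : 0 < G' (radialProj G x) x := hG.deriv_smul_pos hx ht
  let A : X × ℝ →L[ℝ] X :=
    t • ContinuousLinearMap.fst ℝ X ℝ + (ContinuousLinearMap.snd ℝ X ℝ).smulRight x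
  have hA : HasStrictFDerivAt (fun p : X × ℝ => p.2 • p.1) A (x, t) :=
    (hasStrictFDerivAt_snd (𝕜 := ℝ) (p := (x, t))).fun_smul hasStrictFDerivAt_fst
  have hD : HasStrictFDerivAt (fun p : X × ℝ => G (p.2 • p.1)) (G' (radialProj G x) ∘L A) (x, t) :=
    (hG.hasStrictFDerivAt (radialProj G x)).comp (x, t) hA
  have hDinr : (G' (radialProj G x) ∘L A) ∘L .inr ℝ X ℝ =
      ContinuousLinearEquiv.unitsEquivAut ℝ (Units.mk0 _ hpos.ne') := by
    ext
    simp [A]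
  have hinv : ((G' (radialProj G x) ∘L A) ∘L .inr ℝ X ℝ).IsInvertible := ⟨_, hDinr.symm⟩
  have heq : hD.implicitFunctionOfProdDomain hinv =ᶠ[𝓝 x] radialScale G := by
    filter_upwards [hD.eventually_apply_implicitFunctionOfProdDomain hinv,
      (hD.tendsto_implicitFunctionOfProdDomain hinv).eventually (lt_mem_nhds ht),
      isOpen_ne.mem_nhds hx] with y hGy hy_pos hy
    exact (hG.radialScale_eq hy hy_pos (hGy.trans (hG.radialProj_mem_levelSG hx))).symm
  refine ((hD.hasStrictFDerivAt_implicitFunctionOfProdDomain hinv).congr_of_eventuallyEq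
    heq).congr_fderiv ?_
  rw [hDinr, ContinuousLinearMap.inverse_equiv]
  ext w
  simp only [A, ContinuousLinearMap.comp_add, ContinuousLinearMap.comp_smulₛₗ,
    Real.ringHom_apply, ContinuousLinearMap.add_comp, ContinuousLinearMap.smul_comp, neg_add_rev,
    add_apply, neg_apply, ContinuousLinearMap.comp_apply, ContinuousLinearMap.inl_apply,
    ContinuousLinearMap.smulRight_apply, ContinuousLinearMap.coe_snd', zero_smul, map_zero,
    ContinuousLinearEquiv.coe_coe, ContinuousLinearEquiv.unitsEquivAut_apply_symm,
    Units.val_inv_eq_inv_val, Units.val_mk0, neg_zero, smul_apply,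
    ContinuousLinearMap.coe_fst', smul_eq_mul, zero_add, neg_mul, neg_inj]
  field_simp

theorem continuousAt_radialProj [CompleteSpace X] (hG : IsRadialConstraint G G') (hx : x ≠ 0) :
    ContinuousAt (radialProj G) x :=
  (hG.hasStrictFDerivAt_radialScale hx).continuousAt.smul continuousAt_id

theorem hasStrictFDerivAt_radialProj [CompleteSpace X] (hG : IsRadialConstraint G G')
    (hx : x ∈ levelSG G) : HasStrictFDerivAt (radialProj G) (tangentProj (G' x) x) x := by
  have hscale := hG.hasStrictFDerivAt_radialScale (hG.ne_zero_of_mem_levelSG hx)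
  rw [hG.radialScale_of_mem_levelSG hx, hG.radialProj_of_mem_levelSG hx] at hscale
  refine (hscale.smul (hasStrictFDerivAt_id x)).congr_fderiv ?_
  ext w
  simp [tangentProj, hG.radialScale_of_mem_levelSG hx, smul_smul, mul_comm, sub_eq_add_neg]

theorem hasStrictFDerivAt_comp_radialProj [CompleteSpace X] (hG : IsRadialConstraint G G')
    {F : X → ℝ} {F' : X → StrongDual ℝ X} (hx : x ∈ levelSG G) (hF : HasStrictFDerivAt F (F' x) x) :
    HasStrictFDerivAt (F ∘ radialProj G) (tangentialDeriv F' G' x) x := by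
  have hF' : HasStrictFDerivAt F (F' x) (radialProj G x) := by
    rwa [hG.radialProj_of_mem_levelSG hx]
  exact hF'.comp x (hG.hasStrictFDerivAt_radialProj hx)

end IsRadialConstraint

end RadialProjection

section OddMaps

/-- The continuous odd maps from `K` into `S`. Oddness is stated for pairs of points of `K`, which
makes sense without a symmetry assumption on `K`. -/
def oddMaps {X Y : Type*} [TopologicalSpace X] [Neg X] [TopologicalSpace Y] [Neg Y] (K : Set X)
    (S : Set Y) : Set C(K, Y) :=
  {h | (∀ k, h k ∈ S) ∧ ∀ k k' : K, (k' : X) = -k → h k' = -h k}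

theorem neg_mem_of_eq_neg {X : Type*} [InvolutiveNeg X] {K : Set X} (hK : K = -K) {x : X}
    (hx : x ∈ K) : -x ∈ K := by
  rw [hK]
  simpa using hx

section Topological

variable {X Y Z : Type*} [TopologicalSpace X] [InvolutiveNeg X] [TopologicalSpace Y]
  [InvolutiveNeg Y] [TopologicalSpace Z] [Neg Z] {K : Set X} {S : Set Y} {h : C(K, Y)}

theorem isClosed_oddMaps [T2Space Y] [ContinuousNeg Y] (hS : IsClosed S) (K : Set X) :
    IsClosed (oddMaps K S) := by
  have hset : oddMaps K S = (⋂ k : K, {h : C(K, Y) | h k ∈ S}) ∩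
      ⋂ (k : K) (k' : K) (_ : (k' : X) = -k), {h : C(K, Y) | h k' = -h k} := by
    ext h
    simp [oddMaps]
  rw [hset]
  refine (isClosed_iInter fun k => hS.preimage (by fun_prop)).inter
    (isClosed_iInter fun k => isClosed_iInter fun k' => isClosed_iInter fun _ => ?_)
  exact isClosed_eq (by fun_prop) (by fun_prop)

theorem restrict_id_mem_oddMaps {S : Set X} (hKS : K ⊆ S) :
    (ContinuousMap.id X).restrict K ∈ oddMaps K S :=
  ⟨fun k => hKS k.2, fun _ _ hk => hk⟩

theorem exists_mem_oddMaps_apply_eq (hh : h ∈ oddMaps K S) {g : Y → Z}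
    (hg : ContinuousOn g (Set.range h)) (hg_odd : ∀ y, g (-y) = -g y) {S' : Set Z}
    (hgS : ∀ k, g (h k) ∈ S') : ∃ h' ∈ oddMaps K S', ∀ k, h' k = g (h k) :=
  ⟨⟨fun k => g (h k), hg.comp_continuous h.continuous fun k => ⟨k, rfl⟩⟩,
    ⟨hgS, fun k k' hk => (congrArg g (hh.2 k k' hk)).trans (hg_odd _)⟩, fun _ => rfl⟩

theorem range_eq_neg_range (hK : K = -K) (hh : h ∈ oddMaps K S) : Set.range h = -Set.range h := by
  have hneg : ∀ y ∈ Set.range h, -y ∈ Set.range h := by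
    rintro _ ⟨k, rfl⟩
    exact ⟨⟨-k, neg_mem_of_eq_neg hK k.2⟩, hh.2 k _ rfl⟩
  ext y
  exact ⟨hneg y, fun hy => neg_neg y ▸ hneg _ hy⟩

end Topological

variable {X Y : Type*} [NormedAddCommGroup X] [NormedSpace ℝ X] [NormedAddCommGroup Y]
  [NormedSpace ℝ Y] {K : Set X} {n : ℕ}

theorem GenusGe.nonempty (hK : GenusGe K n) (hn : 1 ≤ n) : K.Nonempty := by
  by_contra hempty
  rw [Set.not_nonempty_iff_eq_empty] at hempty
  exact hK 0 hn ⟨0, by simp [hempty]⟩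

theorem GenusGe.range (hK : GenusGe K n) (hKneg : K = -K) {S : Set Y} {h : C(K, Y)}
    (hh : h ∈ oddMaps K S) : GenusGe (Set.range h) n := by
  rintro k hk ⟨g, hg, hg_odd, hg_ne⟩
  have hext (x : K) : Function.extend Subtype.val (g ∘ h) 0 (x : X) = g (h x) :=
    Subtype.val_injective.extend_apply _ _ _
  refine hK k hk ⟨Function.extend Subtype.val (g ∘ h) 0, ?_, fun x hx => ?_, fun x hx => ?_⟩
  · rw [continuousOn_iff_continuous_domRestrict]
    exact (hg.comp_continuous h.continuous fun x => ⟨x, rfl⟩).congr fun x => (hext x).symm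
  · have hneg := hext ⟨-x, neg_mem_of_eq_neg hKneg hx⟩
    rw [hh.2 ⟨x, hx⟩ _ rfl, hg_odd _ ⟨_, rfl⟩] at hneg
    exact hneg.trans (congrArg Neg.neg (hext ⟨x, hx⟩).symm)
  · exact (hext ⟨x, hx⟩).trans_ne (hg_ne _ ⟨_, rfl⟩)

end OddMaps

section InfAlong

variable {Z Y : Type*} [TopologicalSpace Z] [TopologicalSpace Y] {F : Y → ℝ}

/-- The minimum of the functional `F` along the map `h`, which the minimax argument maximizes over
`h`. -/
noncomputable def infAlong (F : Y → ℝ) (h : C(Z, Y)) : ℝ :=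
  ⨅ z, F (h z)

theorem infAlong_eq_sInf_image_range (F : Y → ℝ) (h : C(Z, Y)) :
    infAlong F h = sInf (F '' Set.range h) := by
  rw [← Set.range_comp]
  rfl

theorem le_infAlong [Nonempty Z] {h : C(Z, Y)} {c : ℝ} (hc : ∀ z, c ≤ F (h z)) :
    c ≤ infAlong F h :=
  le_ciInf hc

variable [CompactSpace Z]

theorem bddBelow_range_apply (hF : Continuous F) (h : C(Z, Y)) :
    BddBelow (Set.range fun z => F (h z)) :=
  (isCompact_range (hF.comp h.continuous)).bddBelow

theorem infAlong_le (hF : Continuous F) (h : C(Z, Y)) (z : Z) : infAlong F h ≤ F (h z) :=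
  ciInf_le (bddBelow_range_apply hF h) z

theorem upperSemicontinuous_infAlong (hF : Continuous F) :
    UpperSemicontinuous (infAlong F : C(Z, Y) → ℝ) :=
  upperSemicontinuous_ciInf (bddBelow_range_apply hF)
    fun z => (hF.comp (ContinuousEvalConst.continuous_eval_const z)).upperSemicontinuous

end InfAlong

section LSLevel

variable {X : Type*} [NormedAddCommGroup X] [NormedSpace ℝ X] {F G : X → ℝ} {n : ℕ} {K : Set X}

theorem bddAbove_of_LSLevel_pos (ha : 0 < LSLevel F G n) :
    BddAbove ((fun K => sInf (F '' K)) '' LSFamily F G n) := by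
  by_contra h
  exact ha.ne' (Real.sSup_of_not_bddAbove h)

theorem exists_mem_LSFamily_lt_sInf (ha : 0 < LSLevel F G n) {b : ℝ} (hb : b < LSLevel F G n) :
    ∃ K ∈ LSFamily F G n, b < sInf (F '' K) := by
  have hne : ((fun K => sInf (F '' K)) '' LSFamily F G n).Nonempty := by
    by_contra h
    rw [LSLevel, Set.not_nonempty_iff_eq_empty.1 h, Real.sSup_empty] at ha
    exact ha.false
  obtain ⟨_, ⟨K, hK, rfl⟩, hlt⟩ := exists_lt_of_lt_csSup hne hb
  exact ⟨K, hK, hlt⟩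

theorem range_mem_LSFamily (hK : K ∈ LSFamily F G n) {h : C(K, X)}
    (hh : h ∈ oddMaps K (levelSG G)) (hF : ∀ k, 0 < F (h k)) :
    Set.range h ∈ LSFamily F G n := by
  obtain ⟨-, hKc, hKneg, -, hKgenus⟩ := hK
  have : CompactSpace K := isCompact_iff_compactSpace.1 hKc
  exact ⟨Set.range_subset_iff.2 hh.1, isCompact_range h.continuous, range_eq_neg_range hKneg hh,
    Set.forall_mem_range.2 hF, hKgenus.range hKneg hh⟩

theorem infAlong_le_LSLevel (ha : 0 < LSLevel F G n) (hF : Continuous F)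
    (hK : K ∈ LSFamily F G n) {h : C(K, X)} (hh : h ∈ oddMaps K (levelSG G)) :
    infAlong F h ≤ LSLevel F G n := by
  have : CompactSpace K := isCompact_iff_compactSpace.1 hK.2.1
  rcases le_or_gt (infAlong F h) 0 with hnonpos | hpos
  · exact hnonpos.trans ha.le
  · rw [infAlong_eq_sInf_image_range]
    exact le_csSup (bddAbove_of_LSLevel_pos ha)
      ⟨_, range_mem_LSFamily hK hh fun k => hpos.trans_le (infAlong_le hF h k), rfl⟩

end LSLevel

section Deformation

variable {X : Type*} [NormedAddCommGroup X] [NormedSpace ℝ X] {F G : X → ℝ}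
  {F' G' : X → StrongDual ℝ X} {K : Set X} {m η L : ℝ}

theorem exists_odd_lt_tangentialDeriv_apply (hG : IsRadialConstraint G G')
    (hG_even : Function.Even G) (hF_even : Function.Even F) (hF : ∀ x, HasFDerivAt F (F' x) x)
    (hF' : Continuous F') (hK : IsCompact K) (hKneg : K = -K) (hKG : K ⊆ levelSG G)
    (hη : ∀ x ∈ K, F x = m → η < ‖tangentialDeriv F' G' x‖) :
    ∃ v : C(X, X), Function.Odd v ∧ (∀ x, ‖v x‖ ≤ 1) ∧
      ∀ x ∈ K, F x = m → η < tangentialDeriv F' G' x (v x) := by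
  have hF_cont : Continuous F := continuous_iff_continuousAt.2 fun x => (hF x).continuousAt
  have hC : IsClosed (K ∩ {x | F x = m}) :=
    hK.isClosed.inter (isClosed_eq hF_cont continuous_const)
  obtain ⟨v, hv_odd, hv_norm, hv⟩ := exists_odd_continuousMap_lt_apply
    (T := tangentialDeriv F' G') hC
    (fun x hx => ⟨neg_mem_of_eq_neg hKneg hx.1, (hF_even x).trans hx.2⟩)
    (fun x hx => (continuousAt_tangentialDeriv hF'.continuousAt hG.continuous_deriv.continuousAt
      (hG.deriv_pos x (hG.ne_zero_of_mem_levelSG (hKG hx.1))).ne').continuousWithinAt)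
    (fun x _ => tangentialDeriv_neg (fderiv_neg_of_even hF_even hF x)
      (fderiv_neg_of_even hG_even hG.hasFDerivAt x))
    fun x hx => hη x hx.1 hx.2
  exact ⟨v, hv_odd, hv_norm, fun x hx hxm => hv x ⟨hx, hxm⟩⟩

variable [CompleteSpace X]

theorem eventually_forall_radialProj_add_smul (hG : IsRadialConstraint G G')
    (hF : ∀ x ∈ K, HasStrictFDerivAt F (F' x) x) (hK : IsCompact K) (hKG : K ⊆ levelSG G)
    (hm : ∀ x ∈ K, m ≤ F x) (hL : ∀ x ∈ K, ‖tangentProj (G' x) x‖ < L) {v : C(X, X)}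
    (hv_norm : ∀ x, ‖v x‖ ≤ 1)
    (hv : ∀ x ∈ K, F x = m → η < tangentialDeriv F' G' x (v x)) :
    ∀ᶠ s in 𝓝[>] (0 : ℝ), ∀ x ∈ K, x + s • v x ≠ 0 ∧
      ‖radialProj G (x + s • v x) - x‖ ≤ L * s ∧ m + s * η ≤ F (radialProj G (x + s • v x)) := by
  have hv_cont : ∀ x ∈ K, ContinuousAt v x := fun x _ => v.continuous.continuousAt
  have hproj : ∀ x ∈ K, radialProj G x = x := fun x hx => hG.radialProj_of_mem_levelSG (hKG hx)
  have hnonzero := eventually_forall_add_smul_mem hK hv_cont isOpen_ne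
    fun x hx => hG.ne_zero_of_mem_levelSG (hKG hx)
  have hstep := eventually_forall_norm_add_smul_sub_le hK hv_cont
    (fun x hx => hG.hasStrictFDerivAt_radialProj (hKG hx)) fun x hx =>
      ((tangentProj (G' x) x).unit_le_opNorm _ (hv_norm x)).trans_lt (hL x hx)
  have hgain := eventually_forall_add_mul_le_apply_add_smul hK hv_cont
    (fun x hx => hG.hasStrictFDerivAt_comp_radialProj (hKG hx) (hF x hx))
    (fun x hx => (hm x hx).trans_eq (congrArg F (hproj x hx).symm))
    fun x hx hxm => hv x hx ((congrArg F (hproj x hx)).symm.trans hxm)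
  filter_upwards [hnonzero, hstep, hgain] with s hs_nonzero hs_step hs_gain x hx
  exact ⟨hs_nonzero x hx, by simpa only [hproj x hx] using hs_step x hx, hs_gain x hx⟩

theorem exists_mem_oddMaps_add_mul_le (hG : IsRadialConstraint G G')
    (hG_even : Function.Even G) (hF_even : Function.Even F) (hF : ∀ x, HasFDerivAt F (F' x) x)
    (hF' : Continuous F') (hK : IsCompact K) (hKneg : K = -K) {h : C(K, X)}
    (hh : h ∈ oddMaps K (levelSG G)) (hm : ∀ k, m ≤ F (h k))
    (hL : ∀ x ∈ levelSG G, ‖tangentProj (G' x) x‖ < L)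
    (hη : ∀ k, F (h k) = m → η < ‖tangentialDeriv F' G' (h k)‖) :
    ∃ s > 0, ∃ h₁ ∈ oddMaps K (levelSG G),
      (∀ k, ‖h₁ k - h k‖ ≤ L * s) ∧ ∀ k, m + s * η ≤ F (h₁ k) := by
  have : CompactSpace K := isCompact_iff_compactSpace.1 hK
  have hrange : IsCompact (Set.range h) := isCompact_range h.continuous
  have hrangeG : Set.range h ⊆ levelSG G := Set.range_subset_iff.2 hh.1
  obtain ⟨v, hv_odd, hv_norm, hv⟩ := exists_odd_lt_tangentialDeriv_apply hG hG_even hF_even hF hF'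
    hrange (range_eq_neg_range hKneg hh) hrangeG (Set.forall_mem_range.2 hη)
  obtain ⟨s, hs, hs_pos⟩ := ((eventually_forall_radialProj_add_smul hG
    (fun x _ => hasStrictFDerivAt_of_hasFDerivAt_of_continuousAt (Eventually.of_forall hF)
      hF'.continuousAt) hrange hrangeG (Set.forall_mem_range.2 hm)
    (fun x hx => hL x (hrangeG hx)) hv_norm hv).and self_mem_nhdsWithin).exists
  obtain ⟨h₁, hh₁, hh₁_apply⟩ := exists_mem_oddMaps_apply_eq hh
    (g := fun x => radialProj G (x + s • v x)) (S' := levelSG G)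
    (fun x hx => ContinuousAt.continuousWithinAt
      (ContinuousAt.comp (f := fun x => x + s • v x)
        (hG.continuousAt_radialProj (hs x hx).1) (by fun_prop)))
    (fun x => by rw [hv_odd x, smul_neg, ← neg_add, radialProj_neg hG_even])
    fun k => hG.radialProj_mem_levelSG (hs _ ⟨k, rfl⟩).1
  refine ⟨s, hs_pos, h₁, hh₁, fun k => ?_, fun k => ?_⟩
  · rw [hh₁_apply]
    exact (hs _ ⟨k, rfl⟩).2.1
  · rw [hh₁_apply]
    exact (hs _ ⟨k, rfl⟩).2.2

theorem exists_norm_tangentialDeriv_le_of_mem_oddMaps (hG : IsRadialConstraint G G')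
    (hG_even : Function.Even G) (hF_even : Function.Even F) (hF : ∀ x, HasFDerivAt F (F' x) x)
    (hF' : Continuous F') (hK : IsCompact K) (hKneg : K = -K) (hK_ne : K.Nonempty)
    (hL : ∀ x ∈ levelSG G, ‖tangentProj (G' x) x‖ < L) {b : ℝ}
    (hb : ∀ h ∈ oddMaps K (levelSG G), infAlong F h ≤ b) {h₀ : C(K, X)}
    (hh₀ : h₀ ∈ oddMaps K (levelSG G)) {ε : ℝ} (hε : 0 < ε) :
    ∃ x ∈ levelSG G, infAlong F h₀ ≤ F x ∧ F x ≤ b ∧ ‖tangentialDeriv F' G' x‖ ≤ ε := by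
  have : CompactSpace K := isCompact_iff_compactSpace.1 hK
  have : Nonempty K := hK_ne.to_subtype
  have hF_cont : Continuous F := continuous_iff_continuousAt.2 fun x => (hF x).continuousAt
  have : CompleteSpace (oddMaps K (levelSG G)) :=
    (isClosed_oddMaps hG.isClosed_levelSG K).completeSpace_coe
  have hL_pos : 0 < L :=
    (norm_nonneg _).trans_lt (hL _ (hh₀.1 (Classical.arbitrary K)))
  obtain ⟨⟨h, hh⟩, hle, hmax⟩ := exists_le_forall_ne_lt_add_mul_dist
    (Φ := fun h : oddMaps K (levelSG G) => infAlong F h.1)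
    ((upperSemicontinuous_infAlong hF_cont).comp continuous_subtype_val)
    ⟨b, Set.forall_mem_range.2 fun h => hb h.1 h.2⟩ (div_pos hε hL_pos) ⟨h₀, hh₀⟩
  suffices ∃ k, F (h k) = infAlong F h ∧ ‖tangentialDeriv F' G' (h k)‖ ≤ ε by
    obtain ⟨k, hk, hk_le⟩ := this
    exact ⟨h k, hh.1 k, hle.trans_eq hk.symm, hk.trans_le (hb h hh), hk_le⟩
  -- Otherwise `h` moves by at most `L * s` while its infimum rises by `s * ε`.
  by_contra! hcon
  obtain ⟨s, hs, h₁, hh₁, hdist, hgain⟩ := exists_mem_oddMaps_add_mul_le hG hG_even hF_even hF hF'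
    hK hKneg hh (infAlong_le hF_cont h) hL hcon
  have hinf : infAlong F h + s * ε ≤ infAlong F h₁ := le_infAlong hgain
  have hne : (⟨h₁, hh₁⟩ : oddMaps K (levelSG G)) ≠ ⟨h, hh⟩ := by
    intro heq
    obtain rfl := congrArg Subtype.val heq
    exact (lt_add_of_pos_right _ (mul_pos hs hε)).not_ge hinf
  refine (hmax _ hne).not_ge ?_
  calc infAlong F h + ε / L * dist h h₁ ≤ infAlong F h + ε / L * (L * s) := by
        gcongr
        rw [dist_comm, ContinuousMap.dist_le (by positivity)]
        exact fun k => (dist_eq_norm _ _).trans_le (hdist k)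
    _ = infAlong F h + s * ε := by field_simp
    _ ≤ infAlong F h₁ := hinf

theorem exists_norm_tangentialDeriv_le_near_LSLevel (hG : IsRadialConstraint G G')
    (hG_even : Function.Even G) (hF_even : Function.Even F) (hF : ∀ x, HasFDerivAt F (F' x) x)
    (hF' : Continuous F') (hL : ∀ x ∈ levelSG G, ‖tangentProj (G' x) x‖ < L) {n : ℕ} (hn : 1 ≤ n)
    (ha : 0 < LSLevel F G n) {ε : ℝ} (hε : 0 < ε) :
    ∃ x ∈ levelSG G, |F x - LSLevel F G n| ≤ ε ∧ ‖tangentialDeriv F' G' x‖ ≤ ε := by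
  have hF_cont : Continuous F := continuous_iff_continuousAt.2 fun x => (hF x).continuousAt
  obtain ⟨K, hK, hKlt⟩ := exists_mem_LSFamily_lt_sInf ha (sub_lt_self _ hε)
  have ⟨hKG, hKc, hKneg, _, hKgenus⟩ := hK
  obtain ⟨x, hx, hx_ge, hx_le, hxT⟩ := exists_norm_tangentialDeriv_le_of_mem_oddMaps hG hG_even
    hF_even hF hF' hKc hKneg (hKgenus.nonempty hn) hL
    (fun h hh => infAlong_le_LSLevel ha hF_cont hK hh) (restrict_id_mem_oddMaps hKG) hε
  have hinf : infAlong F ((ContinuousMap.id X).restrict K) = sInf (F '' K) :=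
    sInf_image'.symm
  exact ⟨x, hx, abs_le.2 ⟨by linarith, by linarith⟩, hxT⟩

end Deformation

section PalaisSmale

variable {X : Type*} [NormedAddCommGroup X] [NormedSpace ℝ X]

/-- Condition (S₀) for a map into the dual. Weak convergence in the dual is tested on points only,
which is all there is to test on a reflexive space. -/
def ConditionS₀ (G' : X → StrongDual ℝ X) : Prop :=
  ∀ (x : ℕ → X) (x₀ : X) (f : StrongDual ℝ X), WeakTendsto ℝ x atTop x₀ →
    (∀ w, Tendsto (fun n => G' (x n) w) atTop (𝓝 (f w))) →
    Tendsto (fun n => G' (x n) (x n)) atTop (𝓝 (f x₀)) → Tendsto x atTop (𝓝 x₀)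

theorem isBounded_image_apply_self {S : Set X} {T : X → StrongDual ℝ X}
    (hS : Bornology.IsBounded S) (hT : Bornology.IsBounded (T '' S)) :
    Bornology.IsBounded ((fun x => T x x) '' S) := by
  obtain ⟨R, hR⟩ := hS.exists_norm_le
  obtain ⟨B, hB⟩ := hT.exists_norm_le
  refine isBounded_iff_forall_norm_le.2 ⟨B * R, Set.forall_mem_image.2 fun x hx => ?_⟩
  exact (T x).le_of_opNorm_le_of_le (hB _ ⟨x, hx, rfl⟩) (hR x hx)

theorem exists_forall_norm_tangentProj_lt {S : Set X} {G' : X → StrongDual ℝ X} {δ : ℝ}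
    (hS : Bornology.IsBounded S) (hG' : Bornology.IsBounded (G' '' S)) (hδ : 0 < δ)
    (hδS : ∀ x ∈ S, δ ≤ G' x x) : ∃ L, ∀ x ∈ S, ‖tangentProj (G' x) x‖ < L := by
  obtain ⟨R, hR⟩ := hS.exists_norm_le
  obtain ⟨B, hB⟩ := hG'.exists_norm_le
  exact ⟨1 + B * (δ⁻¹ * R) + 1, fun x hx =>
    (norm_tangentProj_le (hB _ ⟨x, hx, rfl⟩) (hR x hx) hδ (hδS x hx)).trans_lt (lt_add_one _)⟩

variable {F' G' : X → StrongDual ℝ X} {z : ℕ → X} {y : X} {c : ℝ}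

theorem tendsto_deriv_of_tendsto_tangentialDeriv (hF' : StronglyContinuous F')
    (hz : WeakTendsto ℝ z atTop y)
    (hT : Tendsto (fun n => tangentialDeriv F' G' (z n)) atTop (𝓝 0))
    (hGz : Tendsto (fun n => G' (z n) (z n)) atTop (𝓝 c)) (hc : c ≠ 0) (hy : F' y y ≠ 0) :
    Tendsto (fun n => G' (z n)) atTop (𝓝 ((F' y y / c)⁻¹ • F' y)) := by
  have hF'z := hF' z y hz
  have hmult : Tendsto (fun n => F' (z n) (z n) / G' (z n) (z n)) atTop (𝓝 (F' y y / c)) :=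
    (hz.clm_apply hF'z).div hGz hc
  have hlim := (hmult.inv₀ (div_ne_zero hy hc)).smul (hF'z.sub hT)
  rw [sub_zero] at hlim
  refine hlim.congr' ?_
  filter_upwards [hmult.eventually_ne (div_ne_zero hy hc)] with n hn
  rw [tangentialDeriv_eq_sub, sub_sub_cancel, inv_smul_smul₀ hn]

theorem tendsto_and_eq_smul_of_tendsto_tangentialDeriv (hG' : Continuous G')
    (hS₀ : ConditionS₀ G') (hF' : StronglyContinuous F') (hz : WeakTendsto ℝ z atTop y)
    (hT : Tendsto (fun n => tangentialDeriv F' G' (z n)) atTop (𝓝 0))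
    (hGz : Tendsto (fun n => G' (z n) (z n)) atTop (𝓝 c)) (hc : c ≠ 0) (hy : F' y y ≠ 0) :
    Tendsto z atTop (𝓝 y) ∧ F' y = (F' y y / c) • G' y := by
  have hG'z := tendsto_deriv_of_tendsto_tangentialDeriv hF' hz hT hGz hc hy
  have hzy : Tendsto z atTop (𝓝 y) :=
    hS₀ z y _ hz (fun w => ((continuous_eval_const w).tendsto _).comp hG'z) (hz.clm_apply hG'z)
  refine ⟨hzy, ?_⟩
  rw [tendsto_nhds_unique ((hG'.tendsto y).comp hzy) hG'z, smul_inv_smul₀ (div_ne_zero hy hc)]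

theorem exists_eq_smul_of_tendsto_tangentialDeriv
    (hrefl : Function.Surjective (NormedSpace.inclusionInDoubleDual ℝ X)) {F : X → ℝ} {S : Set X}
    (hF : ∀ x, HasFDerivAt F (F' x) x) (hF' : StronglyContinuous F')
    (hFS : ∀ x ∈ closure (convexHull ℝ S), F' x x = 0 → F x = 0) (hG' : Continuous G')
    (hS₀ : ConditionS₀ G') (hS : IsClosed S) (hS_bdd : Bornology.IsBounded S)
    (hG'_bdd : Bornology.IsBounded (G' '' S)) {δ : ℝ} (hδ : 0 < δ) (hδS : ∀ x ∈ S, δ ≤ G' x x)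
    {a : ℝ} (ha : a ≠ 0) {x : ℕ → X} (hx : ∀ n, x n ∈ S)
    (hFx : Tendsto (fun n => F (x n)) atTop (𝓝 a))
    (hT : Tendsto (fun n => tangentialDeriv F' G' (x n)) atTop (𝓝 0)) :
    ∃ y ∈ S, ∃ μ : ℝ, μ ≠ 0 ∧ F' y = μ • G' y ∧ F y = a := by
  obtain ⟨y, θ, hθ, hweak⟩ := exists_subseq_weakTendsto (𝕜 := ℝ) hrefl
    (hS_bdd.subset (Set.range_subset_iff.2 hx))
  obtain ⟨c, -, τ, hτ, hGz⟩ := tendsto_subseq_of_bounded (isBounded_image_apply_self hS_bdd hG'_bdd)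
    fun n => Set.mem_image_of_mem _ (hx (θ n))
  have hsub : Tendsto (θ ∘ τ) atTop atTop := hθ.tendsto_atTop.comp hτ.tendsto_atTop
  have hz : WeakTendsto ℝ (x ∘ θ ∘ τ) atTop y := hweak.comp hτ.tendsto_atTop
  have hc : c ≠ 0 := (hδ.trans_le (ge_of_tendsto' hGz fun n => hδS _ (hx _))).ne'
  have hFy : F y = a := tendsto_nhds_unique (hF'.of_hasFDerivAt hF _ _ hz) (hFx.comp hsub)
  have hy_hull : y ∈ closure (convexHull ℝ S) :=
    hz.mem_of_convex (convex_convexHull ℝ S).closure isClosed_closure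
      (Eventually.of_forall fun n => subset_closure (subset_convexHull ℝ S (hx _)))
  have hy : F' y y ≠ 0 := fun h => ha (hFy.symm.trans (hFS y hy_hull h))
  obtain ⟨hzy, hmult⟩ := tendsto_and_eq_smul_of_tendsto_tangentialDeriv hG' hS₀ hF' hz
    (hT.comp hsub) hGz hc hy
  exact ⟨y, hS.mem_of_tendsto hzy (Eventually.of_forall fun n => hx _), F' y y / c,
    div_ne_zero hy hc, hmult, hFy⟩

end PalaisSmale

/-- Ljusternik–Schnirelman principle, existence part (conclusion (1) of
Theorem 2.5 of the paper): under (F1)–(F4), for every `n ≥ 1` with `a_n > 0`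
there are `ψ_n ∈ S_G` and `μ_n ≠ 0` with `F′(±ψ_n) = μ_n G′(±ψ_n)` and
`F(ψ_n) = a_n`. -/
theorem stmt14 {X : Type*} [NormedAddCommGroup X] [NormedSpace ℝ X] [CompleteSpace X]
    (hrefl : Function.Surjective (NormedSpace.inclusionInDoubleDual ℝ X))
    (F G : X → ℝ) (F' G' : X → X →L[ℝ] ℝ)
    -- (F1)
    (hFeven : ∀ ψ : X, F (-ψ) = F ψ) (hGeven : ∀ ψ : X, G (-ψ) = G ψ)
    (hFderiv : ∀ ψ, HasFDerivAt F (F' ψ) ψ) (hFcont : Continuous F')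
    (hGderiv : ∀ ψ, HasFDerivAt G (G' ψ) ψ)
    (hF0 : F 0 = 0) (hG0 : G 0 = 0)
    -- (F2): F' is strongly continuous
    (hFsc : ∀ (ψ : ℕ → X) (ψ₀ : X),
      (∀ φ : X →L[ℝ] ℝ, Tendsto (fun n => φ (ψ n)) atTop (𝓝 (φ ψ₀))) →
      Tendsto (fun n => F' (ψ n)) atTop (𝓝 (F' ψ₀)))
    (hF2 : ∀ ψ ∈ closure (convexHull ℝ (levelSG G)), F' ψ ψ = 0 → F ψ = 0)
    -- (F3): G' is continuous, bounded and satisfies condition (S₀)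
    (hGcont : Continuous G')
    (hGbdd : ∀ s : Set X, Bornology.IsBounded s →
      Bornology.IsBounded ((fun ψ => G' ψ) '' s))
    (hS0 : ∀ (ψ : ℕ → X) (ψ₀ : X) (v : X →L[ℝ] ℝ),
      (∀ φ : X →L[ℝ] ℝ, Tendsto (fun n => φ (ψ n)) atTop (𝓝 (φ ψ₀))) →
      (∀ x : X, Tendsto (fun n => G' (ψ n) x) atTop (𝓝 (v x))) →
      Tendsto (fun n => G' (ψ n) (ψ n)) atTop (𝓝 (v ψ₀)) →
      Tendsto ψ atTop (𝓝 ψ₀))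
    -- (F4)
    (hSGbdd : Bornology.IsBounded (levelSG G))
    (hGpos : ∀ ψ : X, ψ ≠ 0 → 0 < G' ψ ψ)
    (hGinfty : ∀ ψ : X, ψ ≠ 0 → Tendsto (fun t : ℝ => G (t • ψ)) atTop atTop)
    (hGinf : ∃ δ : ℝ, 0 < δ ∧ ∀ ψ ∈ levelSG G, δ ≤ G' ψ ψ) :
    ∀ n : ℕ, 1 ≤ n → 0 < LSLevel F G n →
      ∃ ψ ∈ levelSG G, ∃ μ : ℝ, μ ≠ 0 ∧
        F' ψ = μ • G' ψ ∧ F' (-ψ) = μ • G' (-ψ) ∧ F ψ = LSLevel F G n := by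
  intro n hn ha
  obtain ⟨δ, hδ, hδG⟩ := hGinf
  have hG : IsRadialConstraint G G' :=
    ⟨hGderiv, hGcont, hG0.trans_lt one_pos, hGpos, hGinfty⟩
  have hG'_bdd := hGbdd _ hSGbdd
  obtain ⟨L, hL⟩ := exists_forall_norm_tangentProj_lt hSGbdd hG'_bdd hδ hδG
  choose x hxG hxF hxT using fun k : ℕ => exists_norm_tangentialDeriv_le_near_LSLevel hG hGeven
    hFeven hFderiv hFcont hL hn ha (Nat.one_div_pos_of_nat (α := ℝ) (n := k))
  have hFx : Tendsto (fun k => F (x k)) atTop (𝓝 (LSLevel F G n)) :=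
    tendsto_iff_norm_sub_tendsto_zero.2 <| squeeze_zero (fun _ => norm_nonneg _) hxF
      tendsto_one_div_add_atTop_nhds_zero_nat
  have hTx : Tendsto (fun k => tangentialDeriv F' G' (x k)) atTop (𝓝 0) :=
    squeeze_zero_norm hxT tendsto_one_div_add_atTop_nhds_zero_nat
  obtain ⟨ψ, hψ, μ, hμ, hmult, hFψ⟩ := exists_eq_smul_of_tendsto_tangentialDeriv hrefl hFderiv
    hFsc hF2 hGcont hS0 hG.isClosed_levelSG hSGbdd hG'_bdd hδ hδG ha.ne' hxG hFx hTx
  refine ⟨ψ, hψ, μ, hμ, hmult, ?_, hFψ⟩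
  rw [fderiv_neg_of_even hFeven hFderiv, fderiv_neg_of_even hGeven hGderiv, hmult,
    smul_neg]
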